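/- Let K_V^t be a complete t-spread d-partite hypergraph with V(K_V^t) ⊆ [n] and V = {V_1, ..., V_d} where |V_j| = 2 and V_j = {i_j, i_j + 1} for all j = 1, ..., d. Then the edge ideal I(K_V^t) is normally torsion-free. -/

import Mathlib

/-! The parts are pairs `V_j = {w_j, w_j + 1}`, so an edge is a choice, for each `j`, of the lower
or the upper vertex. As no vertex is isolated, the spread condition between `j` and `j + 1` is
either vacuous or says "if the upper vertex is chosen at `j`, then also at `j + 1`". Call `(i, j)`
with `i ≤ j` *forced* if every edge through `w_i + 1` passes through `w_j + 1`. For forced `(i, j)`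
the set `T_{ij} = {w_i, w_j + 1}` meets every edge.

Write `v_{ij}(f)` for the least total degree of a monomial of `f` in the variables from `T_{ij}`;
this is an additive valuation with centre the prime generated by the variables of `T_{ij}`.
The main point is `mem_edgeIdeal_pow`: `f ∈ I ^ k` iff `k ≤ v_{ij}(f)` for all forced `(i, j)`,
that is, ordinary and symbolic powers of `I` agree. For this, a monomial `x ^ m` satisfying the
inequalities has to be divisible by a product of `k` edges (`monomial_mem_pow`). The `r`-th of
these (`r < k`) takes at `j` the lower vertex exactly when `r < m (w_i)` for all forced `(i, j)`.
The lower vertex `w_j` is used at most `m (w_j)` times, and the upper one at most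
`k - min_i m (w_i)` times, which is at most `m (w_j + 1)` by hypothesis.

The sets `T_{ij}` form an antichain, and this makes the associated primes of `S / I ^ k` exactly the
centres of the `v_{ij}` (`associatedPrimes_eq_range`), whatever `k ≥ 1` is. -/

open MvPolynomial

noncomputable section

/-- `e : Fin d → Fin n` encodes a `𝐭`-spread edge. -/
def IsSpreadEdge (n d : ℕ) (V : Fin d → Finset (Fin n)) (t : ℕ → ℕ) (e : Fin d → Fin n) :
    Prop :=
  (∀ j, e j ∈ V j) ∧
    ∀ (j : ℕ) (h : j + 1 < d),
      (e ⟨j, Nat.lt_of_succ_lt h⟩ : ℕ) + t j ≤ (e ⟨j + 1, h⟩ : ℕ)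

/-- The set of minimal monomial generators `G(I(K_V^𝐭))`. -/
def spreadGens (K : Type) [Field K] (n d : ℕ) (V : Fin d → Finset (Fin n)) (t : ℕ → ℕ) :
    Set (MvPolynomial (Fin n) K) :=
  {m | ∃ e : Fin d → Fin n, IsSpreadEdge n d V t e ∧ m = ∏ j, X (e j)}

/-- The edge ideal `I(K_V^𝐭)`. -/
def edgeIdeal (K : Type) [Field K] (n d : ℕ) (V : Fin d → Finset (Fin n)) (t : ℕ → ℕ) :
    Ideal (MvPolynomial (Fin n) K) :=
  Ideal.span (spreadGens K n d V t)

/-! ### Associated primes of ideals cut out by valuations -/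

/-- The ideal of elements of valuation at least `k`. For `k = 1` it is the centre of `v`. -/
def valIdeal {R : Type*} [CommRing R] (v : AddValuation R ℕ∞) (k : ℕ) : Ideal R where
  carrier := {f | (k : ℕ∞) ≤ v f}
  add_mem' ha hb := v.map_le_add ha hb
  zero_mem' := by simp
  smul_mem' c x hx := by
    simp only [Set.mem_ofPred_eq, smul_eq_mul, AddValuation.map_mul] at *
    exact hx.trans le_add_self

lemma mem_valIdeal {R : Type*} [CommRing R] {v : AddValuation R ℕ∞} {k : ℕ} {f : R} :
    f ∈ valIdeal v k ↔ (k : ℕ∞) ≤ v f := Iff.rfl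

lemma valIdeal_one_pow_le {R : Type*} [CommRing R] (v : AddValuation R ℕ∞) (k : ℕ) :
    valIdeal v 1 ^ k ≤ valIdeal v k := by
  induction k with
  | zero => intro f _; simp [mem_valIdeal]
  | succ k ih =>
    rw [pow_succ, Ideal.mul_le]
    intro a ha b hb
    have h1 := mem_valIdeal.1 (ih ha)
    have h2 := mem_valIdeal.1 hb
    rw [mem_valIdeal, v.map_mul]
    push_cast at *
    exact add_le_add h1 h2

lemma valIdeal_one_isPrime {R : Type*} [CommRing R] (v : AddValuation R ℕ∞) :
    (valIdeal v 1).IsPrime := by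
  refine ⟨?_, ?_⟩
  · rw [Ideal.ne_top_iff_one, mem_valIdeal]
    simp
  · intro a b h
    simp only [mem_valIdeal, v.map_mul, Nat.cast_one, Order.one_le_iff_ne_zero] at *
    by_contra! hc
    exact h (by rw [hc.1, hc.2, add_zero])

/-- If `J` consists of the `f` with `k ≤ v_s(f)` for all `s`, then the radical of `J : x` is the
intersection of the centres of those `v_s` with `v_s(x) < k`. -/
lemma mem_radical_colon_iff {R ι : Type*} [CommRing R]
    (v : ι → AddValuation R ℕ∞) (J : Ideal R) (k : ℕ)
    (hJ : ∀ f, f ∈ J ↔ ∀ s, (k : ℕ∞) ≤ v s f) (x f : R) :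
    f ∈ ((⊥ : Submodule R (R ⧸ J)).colon {Ideal.Quotient.mk J x}).radical ↔
      ∀ s, v s x < k → f ∈ valIdeal (v s) 1 := by
  have key : ∀ g : R, g ∈ (⊥ : Submodule R (R ⧸ J)).colon {Ideal.Quotient.mk J x} ↔
      ∀ s, (k : ℕ∞) ≤ v s g + v s x := by
    intro g
    rw [Submodule.mem_colon_singleton, Submodule.mem_bot]
    have : g • Ideal.Quotient.mk J x = Ideal.Quotient.mk J (g * x) := rfl
    rw [this, Ideal.Quotient.eq_zero_iff_mem, hJ]
    simp
  rw [Ideal.mem_radical_iff]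
  simp only [key]
  constructor
  · rintro ⟨N, hN⟩ s hs
    rw [mem_valIdeal, Nat.cast_one, Order.one_le_iff_ne_zero]
    intro h0
    have := hN s
    rw [AddValuation.map_pow, h0, smul_zero, zero_add] at this
    exact absurd hs (not_lt.2 this)
  · intro h
    refine ⟨k, fun s => ?_⟩
    rcases lt_or_ge (v s x) k with hs | hs
    · have := mem_valIdeal.1 (h s hs)
      rw [Nat.cast_one] at this
      rw [AddValuation.map_pow]
      refine le_trans ?_ le_self_add
      calc (k : ℕ∞) = k • (1 : ℕ∞) := by simp
        _ ≤ k • v s f := nsmul_le_nsmul_right this k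
    · exact hs.trans le_add_self

/-- An ideal cut out by the conditions `k ≤ v_s(f)`, with `k ≥ 1` and for finitely many valuations
with pairwise incomparable centres, has precisely these centres as associated primes. -/
lemma associatedPrimes_eq_range {R ι : Type*} [CommRing R] [Finite ι]
    (v : ι → AddValuation R ℕ∞) (J : Ideal R) (k : ℕ) (hk : 1 ≤ k)
    (hJ : ∀ f, f ∈ J ↔ ∀ s, (k : ℕ∞) ≤ v s f)
    (hinc : ∀ s s', valIdeal (v s) 1 ≤ valIdeal (v s') 1 → s = s') :
    associatedPrimes R (R ⧸ J) = Set.range fun s => valIdeal (v s) 1 := by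
  classical
  cases nonempty_fintype ι
  ext P
  constructor
  · rintro ⟨hP, x, hx⟩
    obtain ⟨x, rfl⟩ := Ideal.Quotient.mk_surjective x
    have hP' : (Finset.univ.filter fun s => v s x < k).inf (fun s => valIdeal (v s) 1) ≤ P := by
      intro f hf
      rw [hx, mem_radical_colon_iff v J k hJ]
      intro s hs
      exact (Finset.inf_le (f := fun s => valIdeal (v s) 1) (by simpa using hs)) hf
    obtain ⟨s, hs, hsP⟩ := (Ideal.IsPrime.inf_le' hP).1 hP'
    refine ⟨s, le_antisymm hsP fun f hf => ?_⟩
    rw [hx, mem_radical_colon_iff v J k hJ] at hf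
    exact hf s (by simpa using hs)
  · rintro ⟨s, rfl⟩
    have hy : ∀ l, ∃ y, l ≠ s → y ∈ valIdeal (v l) 1 ∧ y ∉ valIdeal (v s) 1 := by
      intro l
      by_cases hl : l = s
      · exact ⟨0, fun h => absurd hl h⟩
      · obtain ⟨y, h1, h2⟩ := SetLike.not_le_iff_exists.1 fun h => hl (hinc l s h)
        exact ⟨y, fun _ => ⟨h1, h2⟩⟩
    choose y hy using hy
    -- `x` has valuation at least `k` for every `v l` with `l ≠ s`, and `0` for `v s`.
    set x := ∏ l ∈ Finset.univ.erase s, y l ^ k with hxdef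
    have hxs : x ∉ valIdeal (v s) 1 := by
      have hp := valIdeal_one_isPrime (v s)
      rw [hxdef, hp.prod_mem_iff]
      rintro ⟨l, hl, hm⟩
      exact (hy l (Finset.ne_of_mem_erase hl)).2 (hp.mem_of_pow_mem _ hm)
    have hxl : ∀ l, l ≠ s → (k : ℕ∞) ≤ v l x := by
      intro l hl
      have h1 : y l ^ k ∈ valIdeal (v l) k :=
        valIdeal_one_pow_le _ _ (Ideal.pow_mem_pow (hy l hl).1 k)
      exact (valIdeal (v l) k).mem_of_dvd
        (Finset.dvd_prod_of_mem _ (Finset.mem_erase.2 ⟨hl, Finset.mem_univ _⟩)) h1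
    refine ⟨valIdeal_one_isPrime _, Ideal.Quotient.mk J x, ?_⟩
    ext f
    rw [mem_radical_colon_iff v J k hJ]
    constructor
    · intro hf l hl
      by_cases h : l = s
      · exact h ▸ hf
      · exact absurd hl (not_lt.2 (hxl l h))
    · intro h
      refine h s (lt_of_not_ge fun h' => hxs ?_)
      rw [mem_valIdeal]
      exact le_trans (by exact_mod_cast hk) h'

/-! ### Order along a set of variables -/

open Classical in
/-- The valuation sending `f` to the least degree in the variables from `s` of a monomial of `f`. -/
def varVal (K : Type) [Field K] {n : ℕ} (s : Set (Fin n)) :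
    AddValuation (MvPolynomial (Fin n) K) ℕ∞ :=
  AddValuation.of
    (fun f => (f : MvPowerSeries (Fin n) K).weightedOrder (fun v => if v ∈ s then 1 else 0))
    (by simp) (by simp)
    (fun f g => by
      rw [MvPolynomial.coe_add]; exact MvPowerSeries.min_weightedOrder_le_add _)
    (fun f g => by
      rw [MvPolynomial.coe_mul]; exact MvPowerSeries.weightedOrder_mul _ _ _)

open Classical in
lemma weight_indicator {n : ℕ} (s : Set (Fin n)) (m : Fin n →₀ ℕ) :
    Finsupp.weight (fun v => if v ∈ s then (1 : ℕ) else 0) m = ∑ v, if v ∈ s then m v else 0 := by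
  rw [Finsupp.weight_apply, Finsupp.sum_fintype _ _ (by simp)]
  simp

open Classical in
lemma varVal_X (K : Type) [Field K] {n : ℕ} (s : Set (Fin n)) (v : Fin n) :
    varVal K s (X v) = if v ∈ s then 1 else 0 := by
  change MvPowerSeries.weightedOrder _ ((X v : MvPolynomial (Fin n) K) : MvPowerSeries (Fin n) K) = _
  rw [MvPolynomial.coe_X, MvPowerSeries.X,
    MvPowerSeries.weightedOrder_monomial_of_ne_zero _ one_ne_zero, Finsupp.weight_single]
  split_ifs <;> simp

open Classical in
lemma varVal_le (K : Type) [Field K] {n : ℕ} (s : Set (Fin n)) (f : MvPolynomial (Fin n) K)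
    (m : Fin n →₀ ℕ) (hm : f.coeff m ≠ 0) :
    varVal K s f ≤ ((∑ v, if v ∈ s then m v else 0 : ℕ) : ℕ∞) := by
  rw [← weight_indicator]
  exact MvPowerSeries.weightedOrder_le _ (by rwa [MvPolynomial.coeff_coe])

/-! ### Forced pairs and the powers of the edge ideal -/

/-- `(i, j)` is forced if `i ≤ j` and every edge through the upper vertex of `V i` also passes
through the upper vertex of `V j`. -/
def Forced (n d : ℕ) (V : Fin d → Finset (Fin n)) (t : ℕ → ℕ) (w : Fin d → Fin n)
    (i j : Fin d) : Prop :=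
  i ≤ j ∧ ∀ e, IsSpreadEdge n d V t e → (e i : ℕ) = w i + 1 → (e j : ℕ) = w j + 1

/-- The cover `{w_i, w_j + 1}`; it is just `{w_i}` when `w_j` is the last vertex `n - 1`. -/
def coverSet {n d : ℕ} (w : Fin d → Fin n) (i j : Fin d) : Set (Fin n) :=
  {v | v = w i ∨ (v : ℕ) = w j + 1}

/-- The exponent in `m` of the upper vertex `w_j + 1`, and `0` if that vertex is out of range. -/
def upExp {n d : ℕ} (w : Fin d → Fin n) (m : Fin n →₀ ℕ) (j : Fin d) : ℕ :=
  if h : (w j : ℕ) + 1 < n then m ⟨w j + 1, h⟩ else 0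

open Classical in
lemma sum_coverSet_le {n d : ℕ} (w : Fin d → Fin n) (m : Fin n →₀ ℕ) (i j : Fin d) :
    (∑ v, if v ∈ coverSet w i j then m v else 0) ≤ m (w i) + upExp w m j := by
  have h1 : (∑ v, if v ∈ coverSet w i j then m v else 0) ≤
      ∑ v, ((if v = w i then m v else 0) + if (v : ℕ) = w j + 1 then m v else 0) := by
    refine Finset.sum_le_sum fun v _ => ?_
    simp only [coverSet, Set.mem_ofPred_eq]
    by_cases h1 : v = w i <;> by_cases h2 : (v : ℕ) = w j + 1 <;> simp [h1, h2]
  refine h1.trans ?_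
  rw [Finset.sum_add_distrib]
  refine add_le_add (by simp) ?_
  unfold upExp
  split_ifs with h
  · have : ∀ v : Fin n, ((v : ℕ) = w j + 1) ↔ v = ⟨w j + 1, h⟩ := fun v => by
      rw [Fin.ext_iff]
    simp [this]
  · refine (Finset.sum_eq_zero fun v _ => ?_).le
    have := v.2
    rw [if_neg (by omega)]

section

variable {n d : ℕ} {V : Fin d → Finset (Fin n)} {t : ℕ → ℕ} {w : Fin d → Fin n}

lemma forced_refl (j : Fin d) : Forced n d V t w j j := ⟨le_rfl, fun _ _ h => h⟩

lemma forced_trans {i j l : Fin d} (h1 : Forced n d V t w i j) (h2 : Forced n d V t w j l) :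
    Forced n d V t w i l :=
  ⟨h1.1.trans h2.1, fun e he h => h2.2 e he (h1.2 e he h)⟩

lemma eq_of_mem_part
    (hV : ∀ i j : Fin d, i < j → ∀ p ∈ V i, ∀ q ∈ V j, (p : ℕ) < (q : ℕ))
    {i j : Fin d} {v : Fin n} (hi : v ∈ V i) (hj : v ∈ V j) : i = j := by
  rcases lt_trichotomy i j with h | h | h
  · exact absurd (hV i j h v hi v hj) (lt_irrefl _)
  · exact h
  · exact absurd (hV j i h v hj v hi) (lt_irrefl _)

lemma lower_mem
    (hint : ∀ (j : Fin d) (x : Fin n),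
      x ∈ V j ↔ ((x : ℕ) = (w j : ℕ) ∨ (x : ℕ) = (w j : ℕ) + 1)) (j : Fin d) : w j ∈ V j :=
  (hint j _).2 (Or.inl rfl)

/-- Since no vertex is isolated, the lower vertices of consecutive parts are far enough apart. -/
lemma lower_spread
    (hiso : ∀ (j : Fin d), ∀ v ∈ V j, ∃ e, IsSpreadEdge n d V t e ∧ e j = v)
    (hV : ∀ i j : Fin d, i < j → ∀ p ∈ V i, ∀ q ∈ V j, (p : ℕ) < (q : ℕ))
    (hint : ∀ (j : Fin d) (x : Fin n),
      x ∈ V j ↔ ((x : ℕ) = (w j : ℕ) ∨ (x : ℕ) = (w j : ℕ) + 1))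
    (j : ℕ) (h : j + 1 < d) :
    (w ⟨j, Nat.lt_of_succ_lt h⟩ : ℕ) + t j ≤ (w ⟨j + 1, h⟩ : ℕ) := by
  set a : Fin d := ⟨j, Nat.lt_of_succ_lt h⟩
  set b : Fin d := ⟨j + 1, h⟩
  have hab : a < b := by simp [a, b, Fin.lt_def]
  have h1 := hV a b hab _ (lower_mem hint a) _ (lower_mem hint b)
  have h2 : (w a : ℕ) + 1 < n := by have := (w b).2; omega
  obtain ⟨e, he, hea⟩ := hiso a ⟨w a + 1, h2⟩ ((hint a _).2 (Or.inr rfl))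
  have h3 : (e a : ℕ) + t j ≤ e b := he.2 j h
  have h4 := (hint b _).1 (he.1 b)
  have h5 : (e a : ℕ) = w a + 1 := by rw [hea]
  omega

/-- The forced covers form an antichain. -/
lemma coverSet_antichain
    (hV : ∀ i j : Fin d, i < j → ∀ p ∈ V i, ∀ q ∈ V j, (p : ℕ) < (q : ℕ))
    (hiso : ∀ (j : Fin d), ∀ v ∈ V j, ∃ e, IsSpreadEdge n d V t e ∧ e j = v)
    (hint : ∀ (j : Fin d) (x : Fin n),
      x ∈ V j ↔ ((x : ℕ) = (w j : ℕ) ∨ (x : ℕ) = (w j : ℕ) + 1))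
    {i j i' j' : Fin d} (hf : Forced n d V t w i j) (hf' : Forced n d V t w i' j')
    (hsub : coverSet w i j ⊆ coverSet w i' j') : i = i' ∧ j = j' := by
  have hii : i = i' := by
    rcases hsub (show w i ∈ coverSet w i j from Or.inl rfl) with h | h
    · exact eq_of_mem_part hV (lower_mem hint i) (h ▸ lower_mem hint i')
    · have := eq_of_mem_part hV (lower_mem hint i) ((hint j' _).2 (Or.inr h))
      subst this
      omega
  refine ⟨hii, ?_⟩
  subst hii
  by_cases hj : (w j : ℕ) + 1 < n
  · rcases hsub (show (⟨w j + 1, hj⟩ : Fin n) ∈ coverSet w i j from Or.inr rfl) with h | h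
    · have := eq_of_mem_part hV ((hint j ⟨w j + 1, hj⟩).2 (Or.inr rfl)) (h ▸ lower_mem hint i)
      subst this
      rw [Fin.ext_iff] at h
      simp at h
    · exact eq_of_mem_part hV ((hint j ⟨w j + 1, hj⟩).2 (Or.inr rfl))
        ((hint j' _).2 (Or.inr h))
  · -- Here `w j` is the last vertex, so `j` is the last part, and `i = j ≤ j'`.
    have hij : i = j := by
      by_contra hne
      have hlt := hV i j (lt_of_le_of_ne hf.1 hne) _ (lower_mem hint i) _ (lower_mem hint j)
      have h2 : (w i : ℕ) + 1 < n := by have := (w j).2; omega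
      obtain ⟨e, he, hei⟩ := hiso i ⟨w i + 1, h2⟩ ((hint i _).2 (Or.inr rfl))
      have := hf.2 e he (by rw [hei])
      have := (e j).2
      omega
    subst hij
    by_contra hne
    have := hV i j' (lt_of_le_of_ne hf'.1 hne) _ (lower_mem hint i) _ (lower_mem hint j')
    have := (w j').2
    omega

/-- A monomial whose degree on every forced cover is at least `k` is divisible by a product of
`k` edges. -/
lemma monomial_mem_pow (K : Type) [Field K]
    (hV : ∀ i j : Fin d, i < j → ∀ p ∈ V i, ∀ q ∈ V j, (p : ℕ) < (q : ℕ))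
    (hiso : ∀ (j : Fin d), ∀ v ∈ V j, ∃ e, IsSpreadEdge n d V t e ∧ e j = v)
    (hint : ∀ (j : Fin d) (x : Fin n),
      x ∈ V j ↔ ((x : ℕ) = (w j : ℕ) ∨ (x : ℕ) = (w j : ℕ) + 1))
    (k : ℕ) (m : Fin n →₀ ℕ)
    (hm : ∀ i j, Forced n d V t w i j → k ≤ m (w i) + upExp w m j) :
    monomial m (1 : K) ∈ edgeIdeal K n d V t ^ k := by
  classical
  -- `low r j` says that the `r`-th edge takes the lower vertex of `V j`.
  let low : ℕ → Fin d → Prop := fun r j => ∀ i, Forced n d V t w i j → r < m (w i)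
  let e : ℕ → Fin d → Fin n := fun r j =>
    if low r j then w j else if h : (w j : ℕ) + 1 < n then ⟨w j + 1, h⟩ else w j
  have he : ∀ r < k, ∀ j, (low r j ∧ e r j = w j) ∨ (¬ low r j ∧ (e r j : ℕ) = w j + 1) := by
    intro r hr j
    by_cases hl : low r j
    · exact Or.inl ⟨hl, by simp [e, hl]⟩
    · refine Or.inr ⟨hl, ?_⟩
      have hlt : (w j : ℕ) + 1 < n := by
        by_contra hlt
        apply hl
        intro i hi
        have := hm i j hi
        simp only [upExp, hlt, dite_false] at this
        omega
      simp [e, hl, hlt]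
  have hmem : ∀ r < k, ∀ j, e r j ∈ V j := by
    intro r hr j
    rw [hint]
    rcases he r hr j with h | h
    · exact Or.inl (by rw [h.2])
    · exact Or.inr h.2
  have hedge : ∀ r < k, IsSpreadEdge n d V t (e r) := by
    intro r hr
    refine ⟨hmem r hr, fun j h => ?_⟩
    have hsp := lower_spread hiso hV hint j h
    set a : Fin d := ⟨j, Nat.lt_of_succ_lt h⟩
    set b : Fin d := ⟨j + 1, h⟩
    have hab : a ≤ b := by simp [a, b, Fin.le_def]
    by_cases hc : (w a : ℕ) + 1 + t j ≤ w b
    · have h1 := (hint a _).1 (hmem r hr a)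
      have h2 := (hint b _).1 (hmem r hr b)
      omega
    · -- The spread condition is tight, hence `(a, b)` is forced.
      have hF : Forced n d V t w a b := by
        refine ⟨hab, fun e' he' h1 => ?_⟩
        have h2 : (e' a : ℕ) + t j ≤ e' b := he'.2 j h
        have h3 := (hint b _).1 (he'.1 b)
        omega
      have hlow : low r b → low r a := fun hb i hi => hb i (forced_trans hi hF)
      rcases he r hr a with h1 | h1 <;> rcases he r hr b with h2 | h2
      · rw [h1.2, h2.2]; exact hsp
      · rw [h1.2, h2.2]; omega
      · exact absurd (hlow h2.1) h1.1
      · omega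
  have hprod : (∏ r ∈ Finset.range k, ∏ j, (X (e r j) : MvPolynomial (Fin n) K)) ∈
      edgeIdeal K n d V t ^ k := by
    have := Ideal.prod_mem_prod (s := Finset.range k) (I := fun _ => edgeIdeal K n d V t)
      (x := fun r => ∏ j, (X (e r j) : MvPolynomial (Fin n) K))
      (fun r hr => Ideal.subset_span ⟨e r, hedge r (Finset.mem_range.1 hr), rfl⟩)
    simpa using this
  refine Ideal.mem_of_dvd _ ?_ hprod
  have hexp : (∏ r ∈ Finset.range k, ∏ j, (X (e r j) : MvPolynomial (Fin n) K)) =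
      monomial (∑ r ∈ Finset.range k, ∑ j, Finsupp.single (e r j) 1) 1 := by
    simp only [MvPolynomial.monomial_sum_one, X]
  rw [hexp]
  apply MvPolynomial.monomial_dvd_monomial.2
  refine ⟨Or.inr fun v => ?_, one_dvd _⟩
  simp only [Finsupp.finsetSum_apply, Finsupp.single_apply]
  by_cases hv : ∃ j0, v ∈ V j0
  · obtain ⟨j0, hj0⟩ := hv
    have hcard : (∑ r ∈ Finset.range k, ∑ j, if e r j = v then 1 else 0) =
        ((Finset.range k).filter fun r => e r j0 = v).card := by
      rw [Finset.card_filter]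
      refine Finset.sum_congr rfl fun r hr => ?_
      refine Finset.sum_eq_single j0 (fun j _ hj => if_neg fun h => hj ?_) (by simp)
      exact eq_of_mem_part hV (h ▸ hmem r (Finset.mem_range.1 hr) j) hj0
    rw [hcard]
    rcases (hint j0 v).1 hj0 with h0 | h0
    · have h0' : v = w j0 := Fin.ext h0
      calc _ ≤ (Finset.range (m v)).card := by
            refine Finset.card_le_card fun r hr => ?_
            rw [Finset.mem_filter, Finset.mem_range] at hr
            rcases he r hr.1 j0 with h | h
            · rw [Finset.mem_range, h0']
              exact h.1 j0 (forced_refl j0)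
            · rw [hr.2] at h
              omega
        _ = m v := Finset.card_range _
    · have hn : (w j0 : ℕ) + 1 < n := h0 ▸ v.2
      have hup : upExp w m j0 = m v := by
        simp only [upExp, hn, dite_true]
        congr 1
        exact Fin.ext h0.symm
      have hnl : ∀ r ∈ (Finset.range k).filter (fun r => e r j0 = v), ¬ low r j0 := by
        intro r hr
        rw [Finset.mem_filter, Finset.mem_range] at hr
        rcases he r hr.1 j0 with h | h
        · rw [← hr.2, h.2] at h0
          omega
        · exact h.1
      rcases Finset.eq_empty_or_nonempty ((Finset.range k).filter fun r => e r j0 = v) with h | h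
      · rw [h]; simp
      · -- The least `r` using `v` bounds some `m (w i)`, so all others lie in `[m (w i), k)`.
        have hmin := Finset.min'_mem _ h
        have hlow := hnl _ hmin
        simp only [low, not_forall, not_lt] at hlow
        obtain ⟨i, hi, hle⟩ := hlow
        calc _ ≤ (Finset.Ico (m (w i)) k).card := by
              refine Finset.card_le_card fun r hr => ?_
              have h1 := Finset.min'_le _ r hr
              rw [Finset.mem_filter, Finset.mem_range] at hr
              rw [Finset.mem_Ico]
              exact ⟨hle.trans h1, hr.1⟩
          _ = k - m (w i) := Nat.card_Ico _ _
          _ ≤ m v := by have := hm i j0 hi; omega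
  · rw [Finset.sum_eq_zero]
    · exact Nat.zero_le _
    · intro r hr
      refine Finset.sum_eq_zero fun j _ => if_neg fun h => hv ⟨j, ?_⟩
      exact h ▸ hmem r (Finset.mem_range.1 hr) j

/-- The powers of the edge ideal are cut out by the orders along the forced covers. -/
lemma mem_edgeIdeal_pow (K : Type) [Field K]
    (hV : ∀ i j : Fin d, i < j → ∀ p ∈ V i, ∀ q ∈ V j, (p : ℕ) < (q : ℕ))
    (hiso : ∀ (j : Fin d), ∀ v ∈ V j, ∃ e, IsSpreadEdge n d V t e ∧ e j = v)
    (hint : ∀ (j : Fin d) (x : Fin n),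
      x ∈ V j ↔ ((x : ℕ) = (w j : ℕ) ∨ (x : ℕ) = (w j : ℕ) + 1))
    (k : ℕ) (f : MvPolynomial (Fin n) K) :
    f ∈ edgeIdeal K n d V t ^ k ↔
      ∀ p : {p : Fin d × Fin d // Forced n d V t w p.1 p.2},
        (k : ℕ∞) ≤ varVal K (coverSet w p.1.1 p.1.2) f := by
  classical
  constructor
  · rintro hf ⟨⟨i, j⟩, hF⟩
    refine valIdeal_one_pow_le _ k (Ideal.pow_right_mono ?_ k hf)
    refine Ideal.span_le.2 ?_
    rintro _ ⟨e, he, rfl⟩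
    have hl : ∃ l, e l ∈ coverSet w i j := by
      rcases (hint i _).1 (he.1 i) with h | h
      · exact ⟨i, Or.inl (Fin.ext h)⟩
      · exact ⟨j, Or.inr (hF.2 e he h)⟩
    obtain ⟨l, hl⟩ := hl
    refine Ideal.mem_of_dvd _ (Finset.dvd_prod_of_mem _ (Finset.mem_univ l)) ?_
    rw [mem_valIdeal, varVal_X, if_pos hl]
    simp
  · intro h
    rw [← f.support_sum_monomial_coeff]
    refine Ideal.sum_mem _ fun m hm => ?_
    have hc : monomial m (f.coeff m) = C (f.coeff m) * monomial m (1 : K) := by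
      rw [MvPolynomial.C_mul_monomial, mul_one]
    rw [hc]
    refine Ideal.mul_mem_left _ _ (monomial_mem_pow K hV hiso hint k m fun i j hF => ?_)
    have h1 := (h ⟨(i, j), hF⟩).trans
      (varVal_le K _ f m (MvPolynomial.mem_support_iff.1 hm))
    exact (Nat.cast_le.1 h1).trans (sum_coverSet_le w m i j)

end

/-- **Proposition.**  If every part has exactly two elements, `V_j = {i_j, i_j + 1}`
(here `w j` encodes `i_j`), then `I(K_V^𝐭)` is normally torsion-free:
`Ass(S/I^k) = Ass(S/I)` for all `k ≥ 1`. -/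
theorem edgeIdeal_normally_torsion_free_of_card_two
    (K : Type) [Field K] (n d : ℕ) (hd : 0 < d)
    (V : Fin d → Finset (Fin n)) (t : ℕ → ℕ)
    (ht : ∀ i, 1 ≤ t i)
    (hV : ∀ i j : Fin d, i < j → ∀ p ∈ V i, ∀ q ∈ V j, (p : ℕ) < (q : ℕ))
    (hne : ∀ j, (V j).Nonempty)
    (hiso : ∀ (j : Fin d), ∀ v ∈ V j, ∃ e, IsSpreadEdge n d V t e ∧ e j = v)
    (w : Fin d → Fin n)
    (hint : ∀ (j : Fin d) (x : Fin n),
      x ∈ V j ↔ ((x : ℕ) = (w j : ℕ) ∨ (x : ℕ) = (w j : ℕ) + 1)) :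
    ∀ k : ℕ, 1 ≤ k →
      associatedPrimes (MvPolynomial (Fin n) K)
          (MvPolynomial (Fin n) K ⧸ (edgeIdeal K n d V t ^ k)) =
        associatedPrimes (MvPolynomial (Fin n) K)
          (MvPolynomial (Fin n) K ⧸ edgeIdeal K n d V t) := by
  have main : ∀ k : ℕ, 1 ≤ k → associatedPrimes (MvPolynomial (Fin n) K)
      (MvPolynomial (Fin n) K ⧸ (edgeIdeal K n d V t ^ k)) =
      Set.range fun p : {p : Fin d × Fin d // Forced n d V t w p.1 p.2} =>
        valIdeal (varVal K (coverSet w p.1.1 p.1.2)) 1 := by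
    intro k hk
    refine associatedPrimes_eq_range _ _ k hk (mem_edgeIdeal_pow K hV hiso hint k) ?_
    rintro ⟨⟨i, j⟩, hF⟩ ⟨⟨i', j'⟩, hF'⟩ hle
    have hsub : coverSet w i j ⊆ coverSet w i' j' := by
      classical
      intro v hv
      have h1 : (X v : MvPolynomial (Fin n) K) ∈ valIdeal (varVal K (coverSet w i j)) 1 := by
        rw [mem_valIdeal, varVal_X, if_pos hv]
        simp
      have h2 := mem_valIdeal.1 (hle h1)
      by_contra hv'
      rw [varVal_X, if_neg hv'] at h2
      simp at h2
    obtain ⟨rfl, rfl⟩ := coverSet_antichain hV hiso hint hF hF' hsub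
    rfl
  intro k hk
  have h1 := main 1 le_rfl
  rw [pow_one] at h1
  rw [main k hk, h1]
end
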